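/- Let k be a commutative ring containing ℚ, Q a smooth k-algebra of relative dimension n, and f ∈ Q. Let E and E′ be matrix factorizations of f that are homotopy equivalent, i.e. there are strict morphisms α : E → E′ and β : E′ → E with α∘β and β∘α homotopic to the respective identities. Then for any choices of connections on E and on E′, the difference Σ_{i=0}^{n} (1/i!)·str(Atⁱ_E) − Σ_{i=0}^{n} (1/i!)·str(Atⁱ_{E′}) lies in the image of df∧ : ⊕_i Ω^{i−1} → ⊕_i Ωⁱ; that is, ch(E) = ch(E′) in H₀((Ω•, df, n)_{ℤ/2}). -/

import Mathlib

/-!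
STATEMENT 13: Let k ⊇ ℚ and Q a smooth k-algebra of relative dimension n (recorded by
smoothness together with the vanishing of products of n+1 one-forms). If E and E′ are
homotopy equivalent matrix factorizations of f ∈ Q, then for any choices of connections
the difference ch(E) − ch(E′) = Σ_{i=0}^{n} (1/i!)(str(Atⁱ_E) − str(Atⁱ_{E′})) lies in the
image of df∧, i.e. ch(E) = ch(E′) in H₀((Ω•, df, n)_{ℤ/2}).
-/

open TensorProduct

universe u
variable (k Q : Type u) [CommRing k] [CommRing Q] [Algebra k Q]

structure Conn (k Q E : Type u) [CommRing k] [CommRing Q] [Algebra k Q]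
    [AddCommGroup E] [Module Q E] where
  toFun : E → (Ω[Q⁄k] ⊗[Q] E)
  map_add : ∀ x y, toFun (x + y) = toFun x + toFun y
  leibniz : ∀ (q : Q) (x : E),
    toFun (q • x) = (KaehlerDifferential.D k Q) q ⊗ₜ[Q] x + q • toFun x

/-- `Λ•Ω¹ ⊗ (Ω¹ ⊗ E) → Λ•Ω¹ ⊗ E`, multiplying the middle one-form in from the right. -/
noncomputable def stepMul (E : Type u) [AddCommGroup E] [Module Q E] :
    (ExteriorAlgebra Q (Ω[Q⁄k]) ⊗[Q] (Ω[Q⁄k] ⊗[Q] E)) →ₗ[Q]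
      (ExteriorAlgebra Q (Ω[Q⁄k]) ⊗[Q] E) :=
  (TensorProduct.map
      (TensorProduct.lift ((LinearMap.mul Q (ExteriorAlgebra Q (Ω[Q⁄k]))).compl₂
        (ExteriorAlgebra.ι Q)))
      LinearMap.id) ∘ₗ
    (TensorProduct.assoc Q (ExteriorAlgebra Q (Ω[Q⁄k])) (Ω[Q⁄k]) E).symm.toLinearMap

/-- `Atⁱ : E → Λ•Ω¹ ⊗ E`, composing the Atiyah class with itself `i` times and multiplying
the resulting one-forms together by the wedge product (`At⁰ = id`). -/
noncomputable def atIter (E : Type u) [AddCommGroup E] [Module Q E]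
    (At : E →ₗ[Q] Ω[Q⁄k] ⊗[Q] E) :
    ℕ → (E →ₗ[Q] ExteriorAlgebra Q (Ω[Q⁄k]) ⊗[Q] E)
  | 0 => TensorProduct.mk Q (ExteriorAlgebra Q (Ω[Q⁄k])) E 1
  | (i+1) => stepMul k Q E ∘ₗ
      (LinearMap.lTensor (ExteriorAlgebra Q (Ω[Q⁄k])) At) ∘ₗ atIter E At i

/-- Trace, with coefficients in a module `N`, of a map `E → N ⊗ E` on a f.g. projective
module `E`, computed via a presentation of `E` as a retract of `Fin r → Q`. -/
noncomputable def trC {N E : Type u} [AddCommGroup N] [Module Q N]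
    [AddCommGroup E] [Module Q E] {r : ℕ}
    (p : (Fin r → Q) →ₗ[Q] E) (s : E →ₗ[Q] (Fin r → Q))
    (g : E →ₗ[Q] N ⊗[Q] E) : N :=
  ∑ j : Fin r, (TensorProduct.rid Q N)
    ((LinearMap.lTensor N (LinearMap.proj j))
      ((LinearMap.lTensor N s) (g (p (Pi.single j 1)))))

/-- The supertrace of a map `E₀ ⊕ E₁ → N ⊗ (E₀ ⊕ E₁)`: the trace of its `(0,0)`-component
minus the trace of its `(1,1)`-component. -/
noncomputable def strT {N E₀ E₁ : Type u} [AddCommGroup N] [Module Q N]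
    [AddCommGroup E₀] [Module Q E₀] [AddCommGroup E₁] [Module Q E₁]
    {r₀ r₁ : ℕ} (p₀ : (Fin r₀ → Q) →ₗ[Q] E₀) (s₀ : E₀ →ₗ[Q] (Fin r₀ → Q))
    (p₁ : (Fin r₁ → Q) →ₗ[Q] E₁) (s₁ : E₁ →ₗ[Q] (Fin r₁ → Q))
    (T : (E₀ × E₁) →ₗ[Q] N ⊗[Q] (E₀ × E₁)) : N :=
  trC Q p₀ s₀ ((LinearMap.lTensor N (LinearMap.fst Q E₀ E₁)) ∘ₗ T ∘ₗ LinearMap.inl Q E₀ E₁)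
    - trC Q p₁ s₁ ((LinearMap.lTensor N (LinearMap.snd Q E₀ E₁)) ∘ₗ T ∘ₗ LinearMap.inr Q E₀ E₁)

/-!
Let `R` be the quotient of the exterior algebra by the two-sided ideal generated by `df`, and let
`a` be the Atiyah class of a matrix factorization with odd differential `d`, regarded as an
`R`-linear endomorphism of `R ⊗ (E₀ ⊕ E₁)`. Differentiating `d² = f` gives `da + ad = df = 0`, so
`a²` commutes with `d`. Differentiating `αd = d'α` for a strict morphism `α` shows that `α`
intertwines the two Atiyah classes up to the commutator of `∇α` with the differentials, hence
intertwines the powers of `a²` up to null-homotopic maps. The supertrace is cyclic and vanishes on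
null-homotopic maps, so the supertraces of the even powers agree for homotopy equivalent
factorizations; those of the odd powers vanish because the projections onto `E₀` and `E₁` are
parallel.
-/

section NullHomotopy

variable {S M N P G : Type*} [Semiring S] [AddCommGroup M] [Module S M]
  [AddCommGroup N] [Module S N] [AddCommGroup P] [Module S P] [AddCommGroup G]

/-- The maps `M → N` that are null-homotopic for odd endomorphisms `dM` and `dN`, i.e. the graded
commutators `dN W + W dM`. Neither `dM` nor `dN` has to square to zero, so this applies to the
twisted differentials of matrix factorizations. -/
def nullHomotopic (dM : Module.End S M) (dN : Module.End S N) : AddSubgroup (M →ₗ[S] N) where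
  carrier := {X | ∃ W : M →ₗ[S] N, dN ∘ₗ W + W ∘ₗ dM = X}
  add_mem' := by
    rintro _ _ ⟨V, rfl⟩ ⟨W, rfl⟩
    exact ⟨V + W, by rw [LinearMap.comp_add, LinearMap.add_comp]; abel⟩
  zero_mem' := ⟨0, by simp⟩
  neg_mem' := by
    rintro _ ⟨W, rfl⟩
    exact ⟨-W, by rw [LinearMap.comp_neg, LinearMap.neg_comp]; abel⟩

variable {dM : Module.End S M} {dN : Module.End S N} {dP : Module.End S P}

lemma comp_mem_nullHomotopic {X : M →ₗ[S] N} (hX : X ∈ nullHomotopic dM dN) {T : N →ₗ[S] P}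
    (hT : dP ∘ₗ T = T ∘ₗ dN) : T ∘ₗ X ∈ nullHomotopic dM dP := by
  obtain ⟨W, rfl⟩ := hX
  refine ⟨T ∘ₗ W, ?_⟩
  rw [LinearMap.comp_add, ← LinearMap.comp_assoc, hT]
  simp only [LinearMap.comp_assoc]

lemma mem_nullHomotopic_comp {X : N →ₗ[S] P} (hX : X ∈ nullHomotopic dN dP) {T : M →ₗ[S] N}
    (hT : dN ∘ₗ T = T ∘ₗ dM) : X ∘ₗ T ∈ nullHomotopic dM dP := by
  obtain ⟨W, rfl⟩ := hX
  refine ⟨W ∘ₗ T, ?_⟩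
  rw [LinearMap.add_comp, LinearMap.comp_assoc _ dN, hT]
  simp only [LinearMap.comp_assoc]

lemma commute_sq_of_mul_eq_neg {aM : Module.End S M} (hM : dM * aM = -(aM * dM)) :
    Commute dM (aM ^ 2) := by
  rw [Commute, SemiconjBy, pow_two, ← mul_assoc, hM, neg_mul, mul_assoc, hM, mul_neg, neg_neg,
    mul_assoc]

lemma comp_sq_sub_sq_comp_mem_nullHomotopic {aM : Module.End S M} {aN : Module.End S N}
    (hM : dM * aM = -(aM * dM)) (hN : dN * aN = -(aN * dN)) {α g : M →ₗ[S] N}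
    (hα : α ∘ₗ aM - aN ∘ₗ α = dN ∘ₗ g - g ∘ₗ dM) :
    α ∘ₗ (aM ^ 2) - (aN ^ 2) ∘ₗ α ∈ nullHomotopic dM dN := by
  refine ⟨g ∘ₗ aM - aN ∘ₗ g, ?_⟩
  ext m
  have hαm (m : M) : α (aM m) - aN (α m) = dN (g m) - g (dM m) := LinearMap.congr_fun hα m
  have hMm : dM (aM m) = -aM (dM m) := LinearMap.congr_fun hM m
  have hNm : dN (aN (g m)) = -aN (dN (g m)) := LinearMap.congr_fun hN (g m)
  have h₁ : α (aM (aM m)) - aN (α (aM m)) = dN (g (aM m)) + g (aM (dM m)) := by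
    rw [hαm, hMm, map_neg, sub_neg_eq_add]
  have h₂ : aN (α (aM m)) - aN (aN (α m)) = aN (dN (g m)) - aN (g (dM m)) := by
    rw [← map_sub, hαm, map_sub]
  simp only [pow_two, LinearMap.add_apply, LinearMap.sub_apply, LinearMap.comp_apply,
    Module.End.mul_apply, map_sub, hNm]
  rw [← sub_add_sub_cancel (α (aM (aM m))) (aN (α (aM m))), h₁, h₂]
  abel

lemma comp_pow_sub_pow_comp_mem_nullHomotopic {bM : Module.End S M} {bN : Module.End S N}
    (hM : Commute dM bM) (hN : Commute dN bN) {α : M →ₗ[S] N}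
    (hα : α ∘ₗ bM - bN ∘ₗ α ∈ nullHomotopic dM dN) (n : ℕ) :
    α ∘ₗ (bM ^ n) - (bN ^ n) ∘ₗ α ∈ nullHomotopic dM dN := by
  induction n with
  | zero => simp [Module.End.one_eq_id]
  | succ n ih =>
    have split : α ∘ₗ (bM ^ (n + 1)) - (bN ^ (n + 1)) ∘ₗ α =
        (α ∘ₗ (bM ^ n) - (bN ^ n) ∘ₗ α) ∘ₗ bM + (bN ^ n) ∘ₗ (α ∘ₗ bM - bN ∘ₗ α) := by
      ext m
      simp [pow_succ]
    rw [split]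
    exact add_mem (mem_nullHomotopic_comp ih hM) (comp_mem_nullHomotopic hα (hN.pow_right n))

lemma map_eq_zero_of_mem_nullHomotopic {tr : Module.End S M →+ G}
    (htr : ∀ X, tr (X * dM) = -tr (dM * X)) {X : Module.End S M}
    (hX : X ∈ nullHomotopic dM dM) : tr X = 0 := by
  obtain ⟨W, rfl⟩ := hX
  rw [map_add]
  exact add_eq_zero_iff_eq_neg'.2 (htr W)

lemma map_pow_eq_of_homotopyEquiv {trM : Module.End S M →+ G} {trN : Module.End S N →+ G}
    (htrM : ∀ X, trM (X * dM) = -trM (dM * X)) (htrN : ∀ X, trN (X * dN) = -trN (dN * X))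
    {α : M →ₗ[S] N} {β : N →ₗ[S] M}
    (htrα : ∀ X : N →ₗ[S] M, trM (X ∘ₗ α) = trN (α ∘ₗ X))
    (hβ : dM ∘ₗ β = β ∘ₗ dN)
    (hβα : β ∘ₗ α - 1 ∈ nullHomotopic dM dM) (hαβ : α ∘ₗ β - 1 ∈ nullHomotopic dN dN)
    {bM : Module.End S M} {bN : Module.End S N} (hM : Commute dM bM) (hN : Commute dN bN)
    (hα : α ∘ₗ bM - bN ∘ₗ α ∈ nullHomotopic dM dN) (n : ℕ) :
    trM (bM ^ n) = trN (bN ^ n) := by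
  have hM₀ := comp_mem_nullHomotopic hβα (hM.pow_right n)
  have hN₀ := comp_mem_nullHomotopic hαβ (hN.pow_right n)
  have hMN := mem_nullHomotopic_comp (comp_pow_sub_pow_comp_mem_nullHomotopic hM hN hα n) hβ
  have vanishM := map_eq_zero_of_mem_nullHomotopic htrM hM₀
  have vanishN := map_eq_zero_of_mem_nullHomotopic htrN hN₀
  have vanishMN := map_eq_zero_of_mem_nullHomotopic htrN hMN
  rw [LinearMap.comp_sub, map_sub, sub_eq_zero] at vanishM vanishN
  rw [LinearMap.sub_comp, map_sub, sub_eq_zero] at vanishMN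
  calc
    trM (bM ^ n) = trM (((bM ^ n) ∘ₗ β) ∘ₗ α) := vanishM.symm
    _ = trN ((α ∘ₗ (bM ^ n)) ∘ₗ β) := htrα _
    _ = trN (((bN ^ n) ∘ₗ α) ∘ₗ β) := vanishMN
    _ = trN (bN ^ n) := vanishN

end NullHomotopy

section TensorTrace

variable {Q} {N N' E F : Type u} [AddCommGroup N] [Module Q N]
  [AddCommGroup N'] [Module Q N'] [AddCommGroup E] [Module Q E] [AddCommGroup F] [Module Q F]
  {r t : ℕ}

lemma apply_eq_sum_of_retract {P : Type*} [AddCommGroup P] [Module Q P]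
    {p : (Fin r → Q) →ₗ[Q] E} {s : E →ₗ[Q] (Fin r → Q)} (hps : ∀ e, p (s e) = e)
    (T : E →ₗ[Q] P) (e : E) : T e = ∑ j, s e j • T (p (Pi.single j 1)) := by
  conv_lhs => rw [← hps e, pi_eq_sum_univ' (s e)]
  simp only [map_sum, map_smul]

lemma rid_lTensor_eq_sum_of_retract
    {p : (Fin r → Q) →ₗ[Q] E} {s : E →ₗ[Q] (Fin r → Q)} (hps : ∀ e, p (s e) = e)
    (c : E →ₗ[Q] Q) (z : N ⊗[Q] E) :
    TensorProduct.rid Q N (c.lTensor N z) = ∑ j, c (p (Pi.single j 1)) •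
      TensorProduct.rid Q N ((LinearMap.proj j).lTensor N (s.lTensor N z)) := by
  induction z using TensorProduct.induction_on with
  | zero => simp
  | tmul x e =>
    rw [LinearMap.lTensor_tmul, TensorProduct.rid_tmul, apply_eq_sum_of_retract hps c,
      Finset.sum_smul]
    simp [smul_smul, mul_comm]
  | add z z' hz hz' => simp only [map_add, hz, hz', smul_add, Finset.sum_add_distrib]

lemma trC_comp_comm
    {p : (Fin r → Q) →ₗ[Q] E} {s : E →ₗ[Q] (Fin r → Q)} (hps : ∀ e, p (s e) = e)
    {q : (Fin t → Q) →ₗ[Q] F} {u : F →ₗ[Q] (Fin t → Q)} (hqu : ∀ e, q (u e) = e)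
    (φ : E →ₗ[Q] F) (g : F →ₗ[Q] N ⊗[Q] E) :
    trC Q p s (g ∘ₗ φ) = trC Q q u (φ.lTensor N ∘ₗ g) := by
  have expandLeft (j : Fin r) : g (φ (p (Pi.single j 1))) =
      ∑ l, u (φ (p (Pi.single j 1))) l • g (q (Pi.single l 1)) :=
    apply_eq_sum_of_retract hqu g _
  have expandRight (l : Fin t) (z : N ⊗[Q] E) :
      TensorProduct.rid Q N ((LinearMap.proj l).lTensor N (u.lTensor N (φ.lTensor N z))) =
        ∑ j, u (φ (p (Pi.single j 1))) l •
          TensorProduct.rid Q N ((LinearMap.proj j).lTensor N (s.lTensor N z)) := by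
    simpa [LinearMap.lTensor_comp] using
      rid_lTensor_eq_sum_of_retract hps (LinearMap.proj l ∘ₗ u ∘ₗ φ) z
  simp only [trC, LinearMap.comp_apply, expandLeft, expandRight, map_sum, map_smul]
  exact Finset.sum_comm

lemma trC_rTensor_comp (ψ : N →ₗ[Q] N') (p : (Fin r → Q) →ₗ[Q] E) (s : E →ₗ[Q] (Fin r → Q))
    (g : E →ₗ[Q] N ⊗[Q] E) : trC Q p s (ψ.rTensor E ∘ₗ g) = ψ (trC Q p s g) := by
  have rid_rTensor (z : N ⊗[Q] Q) :
      TensorProduct.rid Q N' (ψ.rTensor Q z) = ψ (TensorProduct.rid Q N z) := by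
    induction z using TensorProduct.induction_on with
    | zero => simp
    | tmul x a => simp
    | add z z' hz hz' => simp only [map_add, hz, hz']
  have swap {P P' : Type u} [AddCommGroup P] [Module Q P] [AddCommGroup P'] [Module Q P']
      (T : P →ₗ[Q] P') (z : N ⊗[Q] P) :
      T.lTensor N' (ψ.rTensor P z) = ψ.rTensor P' (T.lTensor N z) := by
    simp only [← LinearMap.comp_apply, LinearMap.lTensor_comp_rTensor,
      LinearMap.rTensor_comp_lTensor]
  simp only [trC, LinearMap.comp_apply, swap, rid_rTensor, map_sum]

variable {E₀ E₁ F₀ F₁ : Type u} [AddCommGroup E₀] [Module Q E₀] [AddCommGroup E₁] [Module Q E₁]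
  [AddCommGroup F₀] [Module Q F₀] [AddCommGroup F₁] [Module Q F₁] {r₀ r₁ t₀ t₁ : ℕ}

/-- The odd map `E₀ × E₁ → F₀ × F₁` with components `A : E₁ → F₀` and `B : E₀ → F₁`. The
differential of a matrix factorization and the homotopies between strict morphisms have this
form, while strict morphisms are even, i.e. of the form `LinearMap.prodMap α₀ α₁`. -/
def offDiag (A : E₁ →ₗ[Q] F₀) (B : E₀ →ₗ[Q] F₁) : E₀ × E₁ →ₗ[Q] F₀ × F₁ :=
  LinearMap.inr Q F₀ F₁ ∘ₗ B ∘ₗ LinearMap.fst Q E₀ E₁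
    + LinearMap.inl Q F₀ F₁ ∘ₗ A ∘ₗ LinearMap.snd Q E₀ E₁

@[simp]
lemma offDiag_apply (A : E₁ →ₗ[Q] F₀) (B : E₀ →ₗ[Q] F₁) (e : E₀ × E₁) :
    offDiag A B e = (A e.2, B e.1) := by
  simp [offDiag]

lemma strT_rTensor_comp (ψ : N →ₗ[Q] N')
    (p₀ : (Fin r₀ → Q) →ₗ[Q] E₀) (s₀ : E₀ →ₗ[Q] (Fin r₀ → Q))
    (p₁ : (Fin r₁ → Q) →ₗ[Q] E₁) (s₁ : E₁ →ₗ[Q] (Fin r₁ → Q))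
    (T : E₀ × E₁ →ₗ[Q] N ⊗[Q] (E₀ × E₁)) :
    strT Q p₀ s₀ p₁ s₁ (ψ.rTensor (E₀ × E₁) ∘ₗ T) = ψ (strT Q p₀ s₀ p₁ s₁ T) := by
  simp only [strT, map_sub, ← trC_rTensor_comp, ← LinearMap.comp_assoc,
    LinearMap.lTensor_comp_rTensor, LinearMap.rTensor_comp_lTensor]

section Cyclicity

variable
  {p₀ : (Fin r₀ → Q) →ₗ[Q] E₀} {s₀ : E₀ →ₗ[Q] (Fin r₀ → Q)} (hps₀ : ∀ e, p₀ (s₀ e) = e)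
  {p₁ : (Fin r₁ → Q) →ₗ[Q] E₁} {s₁ : E₁ →ₗ[Q] (Fin r₁ → Q)} (hps₁ : ∀ e, p₁ (s₁ e) = e)
  {q₀ : (Fin t₀ → Q) →ₗ[Q] F₀} {u₀ : F₀ →ₗ[Q] (Fin t₀ → Q)} (hqu₀ : ∀ e, q₀ (u₀ e) = e)
  {q₁ : (Fin t₁ → Q) →ₗ[Q] F₁} {u₁ : F₁ →ₗ[Q] (Fin t₁ → Q)} (hqu₁ : ∀ e, q₁ (u₁ e) = e)

include hps₀ hps₁

include hqu₀ hqu₁ in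
lemma strT_comp_prodMap (α₀ : E₀ →ₗ[Q] F₀) (α₁ : E₁ →ₗ[Q] F₁)
    (T : F₀ × F₁ →ₗ[Q] N ⊗[Q] (E₀ × E₁)) :
    strT Q p₀ s₀ p₁ s₁ (T ∘ₗ α₀.prodMap α₁) =
      strT Q q₀ u₀ q₁ u₁ ((α₀.prodMap α₁).lTensor N ∘ₗ T) := by
  have comp_inl : α₀.prodMap α₁ ∘ₗ LinearMap.inl Q E₀ E₁ = LinearMap.inl Q F₀ F₁ ∘ₗ α₀ := by
    ext <;> simp
  have comp_inr : α₀.prodMap α₁ ∘ₗ LinearMap.inr Q E₀ E₁ = LinearMap.inr Q F₀ F₁ ∘ₗ α₁ := by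
    ext <;> simp
  have fst_comp : LinearMap.fst Q F₀ F₁ ∘ₗ α₀.prodMap α₁ = α₀ ∘ₗ LinearMap.fst Q E₀ E₁ := rfl
  have snd_comp : LinearMap.snd Q F₀ F₁ ∘ₗ α₀.prodMap α₁ = α₁ ∘ₗ LinearMap.snd Q E₀ E₁ := rfl
  simp only [strT, LinearMap.comp_assoc, comp_inl, comp_inr]
  simp only [← LinearMap.comp_assoc, trC_comp_comm hps₀ hqu₀, trC_comp_comm hps₁ hqu₁,
    ← LinearMap.lTensor_comp, fst_comp, snd_comp]

lemma strT_comp_offDiag (A : E₁ →ₗ[Q] E₀) (B : E₀ →ₗ[Q] E₁)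
    (T : E₀ × E₁ →ₗ[Q] N ⊗[Q] (E₀ × E₁)) :
    strT Q p₀ s₀ p₁ s₁ (T ∘ₗ offDiag A B) =
      -strT Q p₀ s₀ p₁ s₁ ((offDiag A B).lTensor N ∘ₗ T) := by
  have comp_inl : offDiag A B ∘ₗ LinearMap.inl Q E₀ E₁ = LinearMap.inr Q E₀ E₁ ∘ₗ B := by
    ext <;> simp
  have comp_inr : offDiag A B ∘ₗ LinearMap.inr Q E₀ E₁ = LinearMap.inl Q E₀ E₁ ∘ₗ A := by
    ext <;> simp
  have fst_comp : LinearMap.fst Q E₀ E₁ ∘ₗ offDiag A B = A ∘ₗ LinearMap.snd Q E₀ E₁ := by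
    ext <;> simp
  have snd_comp : LinearMap.snd Q E₀ E₁ ∘ₗ offDiag A B = B ∘ₗ LinearMap.fst Q E₀ E₁ := by
    ext <;> simp
  simp only [strT, LinearMap.comp_assoc, comp_inl, comp_inr]
  simp only [← LinearMap.comp_assoc, trC_comp_comm hps₀ hps₁, trC_comp_comm hps₁ hps₀,
    ← LinearMap.lTensor_comp, fst_comp, snd_comp, neg_sub]

end Cyclicity
end TensorTrace

section CoefficientExtension

variable {Q} {R V E F G : Type*} [Ring R] [Algebra Q R] [AddCommGroup V] [Module Q V]
  [AddCommGroup E] [Module Q E] [AddCommGroup F] [Module Q F] [AddCommGroup G] [Module Q G]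

/-- The `R`-linear extension of a map `T : E → V ⊗ F` along `ψ : V → R`, namely
`r ⊗ e ↦ r • (ψ ⊗ 1) (T e)`. With `V` a module of one-forms it turns iteration of the Atiyah class
into powers of an endomorphism of a left module over the noncommutative ring `R`. -/
noncomputable def linearExtension (ψ : V →ₗ[Q] R) (T : E →ₗ[Q] V ⊗[Q] F) :
    R ⊗[Q] E →ₗ[R] R ⊗[Q] F :=
  AlgebraTensorModule.lift (LinearMap.toSpanSingleton R _ (ψ.rTensor F ∘ₗ T))

variable (ψ : V →ₗ[Q] R)

@[simp]
lemma linearExtension_tmul (T : E →ₗ[Q] V ⊗[Q] F) (r : R) (e : E) :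
    linearExtension ψ T (r ⊗ₜ e) = r • ψ.rTensor F (T e) :=
  rfl

@[simp]
lemma linearExtension_zero : linearExtension ψ (0 : E →ₗ[Q] V ⊗[Q] F) = 0 := by
  ext; simp

lemma linearExtension_add (T T' : E →ₗ[Q] V ⊗[Q] F) :
    linearExtension ψ (T + T') = linearExtension ψ T + linearExtension ψ T' := by
  ext; simp

lemma linearExtension_comp (T : F →ₗ[Q] V ⊗[Q] G) (φ : E →ₗ[Q] F) :
    linearExtension ψ (T ∘ₗ φ) = linearExtension ψ T ∘ₗ φ.baseChange R := by
  ext; simp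

lemma linearExtension_lTensor_comp (φ : F →ₗ[Q] G) (T : E →ₗ[Q] V ⊗[Q] F) :
    linearExtension ψ (φ.lTensor V ∘ₗ T) = φ.baseChange R ∘ₗ linearExtension ψ T := by
  ext e
  have swap : ψ.rTensor G (φ.lTensor V (T e)) = φ.baseChange R (ψ.rTensor F (T e)) := by
    induction T e using TensorProduct.induction_on with
    | zero => simp
    | tmul v f => simp
    | add z z' hz hz' => simp only [map_add, hz, hz']
  simpa using swap

lemma linearExtension_mk_eq_zero {v : V} (hv : ψ v = 0) :
    linearExtension ψ (TensorProduct.mk Q V E v) = 0 := by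
  ext; simp [hv]

end CoefficientExtension

section Supertrace

variable {Q} {R E₀ E₁ F₀ F₁ : Type u} [Ring R] [Algebra Q R]
  [AddCommGroup E₀] [Module Q E₀] [AddCommGroup E₁] [Module Q E₁]
  [AddCommGroup F₀] [Module Q F₀] [AddCommGroup F₁] [Module Q F₁] {r₀ r₁ t₀ t₁ : ℕ}

/-- The supertrace of an `R`-linear endomorphism of `R ⊗ (E₀ ⊕ E₁)`, with values in `R`. -/
noncomputable def supertrace (p₀ : (Fin r₀ → Q) →ₗ[Q] E₀) (s₀ : E₀ →ₗ[Q] (Fin r₀ → Q))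
    (p₁ : (Fin r₁ → Q) →ₗ[Q] E₁) (s₁ : E₁ →ₗ[Q] (Fin r₁ → Q)) :
    Module.End R (R ⊗[Q] (E₀ × E₁)) →+ R where
  toFun X := strT Q p₀ s₀ p₁ s₁ (X.restrictScalars Q ∘ₗ TensorProduct.mk Q R (E₀ × E₁) 1)
  map_zero' := by simp [strT, trC]
  map_add' X Y := by
    simp only [strT, trC, LinearMap.comp_apply, LinearMap.restrictScalars_apply,
      LinearMap.add_apply, map_add, Finset.sum_add_distrib]
    abel

variable
  {p₀ : (Fin r₀ → Q) →ₗ[Q] E₀} {s₀ : E₀ →ₗ[Q] (Fin r₀ → Q)} (hps₀ : ∀ e, p₀ (s₀ e) = e)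
  {p₁ : (Fin r₁ → Q) →ₗ[Q] E₁} {s₁ : E₁ →ₗ[Q] (Fin r₁ → Q)} (hps₁ : ∀ e, p₁ (s₁ e) = e)
  {q₀ : (Fin t₀ → Q) →ₗ[Q] F₀} {u₀ : F₀ →ₗ[Q] (Fin t₀ → Q)} (hqu₀ : ∀ e, q₀ (u₀ e) = e)
  {q₁ : (Fin t₁ → Q) →ₗ[Q] F₁} {u₁ : F₁ →ₗ[Q] (Fin t₁ → Q)} (hqu₁ : ∀ e, q₁ (u₁ e) = e)

include hps₀ hps₁

include hqu₀ hqu₁ in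
lemma supertrace_comp_baseChange_prodMap (α₀ : E₀ →ₗ[Q] F₀) (α₁ : E₁ →ₗ[Q] F₁)
    (X : R ⊗[Q] (F₀ × F₁) →ₗ[R] R ⊗[Q] (E₀ × E₁)) :
    supertrace p₀ s₀ p₁ s₁ (X ∘ₗ (α₀.prodMap α₁).baseChange R) =
      supertrace q₀ u₀ q₁ u₁ ((α₀.prodMap α₁).baseChange R ∘ₗ X) :=
  strT_comp_prodMap hps₀ hps₁ hqu₀ hqu₁ α₀ α₁
    (X.restrictScalars Q ∘ₗ TensorProduct.mk Q R (F₀ × F₁) 1)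

lemma supertrace_comp_baseChange_offDiag (A : E₁ →ₗ[Q] E₀) (B : E₀ →ₗ[Q] E₁)
    (X : Module.End R (R ⊗[Q] (E₀ × E₁))) :
    supertrace p₀ s₀ p₁ s₁ (X * (offDiag A B).baseChange R) =
      -supertrace p₀ s₀ p₁ s₁ ((offDiag A B).baseChange R * X) :=
  strT_comp_offDiag hps₀ hps₁ A B
    (X.restrictScalars Q ∘ₗ TensorProduct.mk Q R (E₀ × E₁) 1)

end Supertrace

section AtiyahIteration

variable {k Q} {R E E₀ E₁ : Type u} [Ring R] [Algebra Q R] [AddCommGroup E] [Module Q E]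
  [AddCommGroup E₀] [Module Q E₀] [AddCommGroup E₁] [Module Q E₁] {r₀ r₁ : ℕ}
  (φ : ExteriorAlgebra Q Ω[Q⁄k] →ₐ[Q] R)

lemma rTensor_stepMul_tmul (x : ExteriorAlgebra Q Ω[Q⁄k]) (z : Ω[Q⁄k] ⊗[Q] E) :
    φ.toLinearMap.rTensor E (stepMul k Q E (x ⊗ₜ z)) =
      φ x • (φ.toLinearMap ∘ₗ ExteriorAlgebra.ι Q).rTensor E z := by
  induction z using TensorProduct.induction_on with
  | zero => simp
  | tmul ω e => simp [stepMul, TensorProduct.smul_tmul']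
  | add z z' hz hz' => simp only [TensorProduct.tmul_add, map_add, smul_add, hz, hz']

lemma rTensor_stepMul_lTensor (T : E →ₗ[Q] Ω[Q⁄k] ⊗[Q] E)
    (z : ExteriorAlgebra Q Ω[Q⁄k] ⊗[Q] E) :
    φ.toLinearMap.rTensor E (stepMul k Q E (T.lTensor _ z)) =
      linearExtension (φ.toLinearMap ∘ₗ ExteriorAlgebra.ι Q) T
        (φ.toLinearMap.rTensor E z) := by
  induction z using TensorProduct.induction_on with
  | zero => simp
  | tmul x e => simp [rTensor_stepMul_tmul]
  | add z z' hz hz' => simp only [map_add, hz, hz']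

lemma rTensor_atIter (T : E →ₗ[Q] Ω[Q⁄k] ⊗[Q] E) (i : ℕ) (e : E) :
    φ.toLinearMap.rTensor E (atIter k Q E T i e) =
      (linearExtension (φ.toLinearMap ∘ₗ ExteriorAlgebra.ι Q) T ^ i) (1 ⊗ₜ e) := by
  induction i with
  | zero => simp [atIter]
  | succ i ih =>
    rw [pow_succ', Module.End.mul_apply, ← ih, ← rTensor_stepMul_lTensor]
    rfl

lemma map_strT_atIter (p₀ : (Fin r₀ → Q) →ₗ[Q] E₀) (s₀ : E₀ →ₗ[Q] (Fin r₀ → Q))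
    (p₁ : (Fin r₁ → Q) →ₗ[Q] E₁) (s₁ : E₁ →ₗ[Q] (Fin r₁ → Q))
    (T : E₀ × E₁ →ₗ[Q] Ω[Q⁄k] ⊗[Q] (E₀ × E₁)) (i : ℕ) :
    φ (strT Q p₀ s₀ p₁ s₁ (atIter k Q (E₀ × E₁) T i)) =
      supertrace p₀ s₀ p₁ s₁
        (linearExtension (φ.toLinearMap ∘ₗ ExteriorAlgebra.ι Q) T ^ i) := by
  rw [← AlgHom.toLinearMap_apply, ← strT_rTensor_comp]
  exact congrArg (strT Q p₀ s₀ p₁ s₁) (LinearMap.ext (rTensor_atIter φ T i))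

end AtiyahIteration

section Connections

variable {k Q} {E F G E₀ E₁ F₀ F₁ : Type u} [AddCommGroup E] [Module Q E]
  [AddCommGroup F] [Module Q F] [AddCommGroup G] [Module Q G]
  [AddCommGroup E₀] [Module Q E₀] [AddCommGroup E₁] [Module Q E₁]
  [AddCommGroup F₀] [Module Q F₀] [AddCommGroup F₁] [Module Q F₁]

namespace Conn

/-- The covariant derivative `∇' ∘ φ - (1 ⊗ φ) ∘ ∇` of a linear map `φ : E → F` with respect to
connections on `E` and `F`. For a differential of a matrix factorization it is a component of the
Atiyah class. -/
noncomputable def covDeriv (nE : Conn k Q E) (nF : Conn k Q F) (φ : E →ₗ[Q] F) :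
    E →ₗ[Q] Ω[Q⁄k] ⊗[Q] F where
  toFun e := nF.toFun (φ e) - φ.lTensor Ω[Q⁄k] (nE.toFun e)
  map_add' e e' := by
    simp only [LinearMap.map_add, nE.map_add, nF.map_add]
    abel
  map_smul' q e := by
    simp [nE.leibniz, nF.leibniz, smul_sub]

variable {nE : Conn k Q E} {nF : Conn k Q F} {nG : Conn k Q G}

lemma covDeriv_apply (φ : E →ₗ[Q] F) (e : E) :
    covDeriv nE nF φ e = nF.toFun (φ e) - φ.lTensor Ω[Q⁄k] (nE.toFun e) :=
  rfl

lemma covDeriv_add (φ φ' : E →ₗ[Q] F) :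
    covDeriv nE nF (φ + φ') = covDeriv nE nF φ + covDeriv nE nF φ' := by
  ext e
  simp only [covDeriv_apply, LinearMap.add_apply, nF.map_add, LinearMap.lTensor_add]
  abel

variable (nF) in
lemma covDeriv_comp (χ : F →ₗ[Q] G) (φ : E →ₗ[Q] F) :
    covDeriv nE nG (χ ∘ₗ φ) =
      covDeriv nF nG χ ∘ₗ φ + χ.lTensor Ω[Q⁄k] ∘ₗ covDeriv nE nF φ := by
  ext e
  simp [covDeriv_apply, LinearMap.lTensor_comp]

lemma covDeriv_smul_id (f : Q) :
    covDeriv nE nE (f • LinearMap.id) =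
      TensorProduct.mk Q Ω[Q⁄k] E (KaehlerDifferential.D k Q f) := by
  ext e
  simp [covDeriv_apply, nE.leibniz, LinearMap.lTensor_smul]

lemma toFun_zero : nE.toFun 0 = 0 := by
  simpa using nE.map_add 0 0

/-- The direct sum connection on `E₀ × E₁`. -/
noncomputable def prod (n₀ : Conn k Q E₀) (n₁ : Conn k Q E₁) : Conn k Q (E₀ × E₁) where
  toFun e := (LinearMap.inl Q E₀ E₁).lTensor Ω[Q⁄k] (n₀.toFun e.1)
    + (LinearMap.inr Q E₀ E₁).lTensor Ω[Q⁄k] (n₁.toFun e.2)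
  map_add e e' := by
    simp only [Prod.fst_add, Prod.snd_add, n₀.map_add, n₁.map_add, LinearMap.map_add]
    abel
  leibniz q e := by
    simp only [Prod.smul_fst, Prod.smul_snd, n₀.leibniz, n₁.leibniz, LinearMap.map_add,
      LinearMap.map_smul, LinearMap.lTensor_tmul, smul_add]
    rw [add_add_add_comm, ← TensorProduct.tmul_add]
    simp

variable {n₀ : Conn k Q E₀} {n₁ : Conn k Q E₁} {n₀' : Conn k Q F₀} {n₁' : Conn k Q F₁}

lemma prod_apply (e : E₀ × E₁) :
    (n₀.prod n₁).toFun e = (LinearMap.inl Q E₀ E₁).lTensor Ω[Q⁄k] (n₀.toFun e.1)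
      + (LinearMap.inr Q E₀ E₁).lTensor Ω[Q⁄k] (n₁.toFun e.2) :=
  rfl

lemma covDeriv_inl : covDeriv n₀ (n₀.prod n₁) (LinearMap.inl Q E₀ E₁) = 0 := by
  ext e
  simp [covDeriv_apply, prod_apply, toFun_zero]

lemma covDeriv_inr : covDeriv n₁ (n₀.prod n₁) (LinearMap.inr Q E₀ E₁) = 0 := by
  ext e
  simp [covDeriv_apply, prod_apply, toFun_zero]

lemma covDeriv_fst : covDeriv (n₀.prod n₁) n₀ (LinearMap.fst Q E₀ E₁) = 0 := by
  ext e <;> simp [covDeriv_apply, prod_apply, ← LinearMap.lTensor_comp_apply]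

lemma covDeriv_snd : covDeriv (n₀.prod n₁) n₁ (LinearMap.snd Q E₀ E₁) = 0 := by
  ext e <;> simp [covDeriv_apply, prod_apply, ← LinearMap.lTensor_comp_apply]

lemma covDeriv_inl_comp_fst :
    covDeriv (n₀.prod n₁) (n₀.prod n₁) (LinearMap.inl Q E₀ E₁ ∘ₗ LinearMap.fst Q E₀ E₁) = 0 := by
  simp [covDeriv_comp n₀, covDeriv_inl, covDeriv_fst]

lemma covDeriv_inr_comp_snd :
    covDeriv (n₀.prod n₁) (n₀.prod n₁) (LinearMap.inr Q E₀ E₁ ∘ₗ LinearMap.snd Q E₀ E₁) = 0 := by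
  simp [covDeriv_comp n₁, covDeriv_inr, covDeriv_snd]

lemma covDeriv_offDiag (A : E₁ →ₗ[Q] F₀) (B : E₀ →ₗ[Q] F₁) :
    covDeriv (n₀.prod n₁) (n₀'.prod n₁') (offDiag A B) =
      (LinearMap.inr Q F₀ F₁).lTensor Ω[Q⁄k] ∘ₗ covDeriv n₀ n₁' B ∘ₗ LinearMap.fst Q E₀ E₁
        + (LinearMap.inl Q F₀ F₁).lTensor Ω[Q⁄k] ∘ₗ covDeriv n₁ n₀' A ∘ₗ
          LinearMap.snd Q E₀ E₁ := by
  simp only [offDiag, covDeriv_add, covDeriv_comp n₁' (LinearMap.inr Q F₀ F₁),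
    covDeriv_comp n₀' (LinearMap.inl Q F₀ F₁), covDeriv_comp n₀ B, covDeriv_comp n₁ A,
    covDeriv_inl, covDeriv_inr, covDeriv_fst, covDeriv_snd, LinearMap.zero_comp,
    LinearMap.comp_zero, zero_add, add_zero]

lemma eq_covDeriv_offDiag {A : E₁ →ₗ[Q] F₀} {B : E₀ →ₗ[Q] F₁}
    {At : E₀ × E₁ →ₗ[Q] Ω[Q⁄k] ⊗[Q] (F₀ × F₁)}
    {At₁ : E₁ →ₗ[Q] Ω[Q⁄k] ⊗[Q] F₀} {At₀ : E₀ →ₗ[Q] Ω[Q⁄k] ⊗[Q] F₁}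
    (hAt₁ : ∀ e, At₁ e = n₀'.toFun (A e) - A.lTensor Ω[Q⁄k] (n₁.toFun e))
    (hAt₀ : ∀ e, At₀ e = n₁'.toFun (B e) - B.lTensor Ω[Q⁄k] (n₀.toFun e))
    (hAt : At = (LinearMap.inr Q F₀ F₁).lTensor Ω[Q⁄k] ∘ₗ At₀ ∘ₗ LinearMap.fst Q E₀ E₁
      + (LinearMap.inl Q F₀ F₁).lTensor Ω[Q⁄k] ∘ₗ At₁ ∘ₗ LinearMap.snd Q E₀ E₁) :
    At = covDeriv (n₀.prod n₁) (n₀'.prod n₁') (offDiag A B) := by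
  obtain rfl : At₁ = covDeriv n₁ n₀' A := LinearMap.ext hAt₁
  obtain rfl : At₀ = covDeriv n₀ n₁' B := LinearMap.ext hAt₀
  rw [hAt, covDeriv_offDiag]

end Conn

section Scalars

variable {R : Type*} [Ring R] [Algebra Q R] (ψ : Ω[Q⁄k] →ₗ[Q] R)
  {nE : Conn k Q E} {nF : Conn k Q F} {nG : Conn k Q G}

variable (nF) in
lemma linearExtension_covDeriv_comp (χ : F →ₗ[Q] G) (φ : E →ₗ[Q] F) :
    linearExtension ψ (nE.covDeriv nG (χ ∘ₗ φ)) =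
      linearExtension ψ (nF.covDeriv nG χ) ∘ₗ φ.baseChange R
        + χ.baseChange R ∘ₗ linearExtension ψ (nE.covDeriv nF φ) := by
  rw [Conn.covDeriv_comp nF, linearExtension_add, linearExtension_comp,
    linearExtension_lTensor_comp]

/-- The Atiyah class `∇ d` of an endomorphism `d` of `E`, as an endomorphism of the left `R`-module
`R ⊗ E`. Its powers compute the iterated Atiyah class with coefficients pushed forward to `R`. -/
noncomputable def atiyahEnd (nE : Conn k Q E) (d : Module.End Q E) : Module.End R (R ⊗[Q] E) :=
  linearExtension ψ (nE.covDeriv nE d)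

lemma baseChange_mul_atiyahEnd {f : Q} (hf : ψ (KaehlerDifferential.D k Q f) = 0)
    {d : Module.End Q E} (hd : d ∘ₗ d = f • LinearMap.id) :
    d.baseChange R * atiyahEnd ψ nE d = -(atiyahEnd ψ nE d * d.baseChange R) := by
  have h := linearExtension_covDeriv_comp ψ nE (nE := nE) (nG := nE) d d
  rw [hd, Conn.covDeriv_smul_id, linearExtension_mk_eq_zero ψ hf] at h
  rw [atiyahEnd, Module.End.mul_eq_comp, Module.End.mul_eq_comp]
  grind

lemma baseChange_comp_atiyahEnd_sub {dE : Module.End Q E} {dF : Module.End Q F} {φ : E →ₗ[Q] F}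
    (hφ : dF ∘ₗ φ = φ ∘ₗ dE) :
    φ.baseChange R ∘ₗ atiyahEnd ψ nE dE - atiyahEnd ψ nF dF ∘ₗ φ.baseChange R =
      dF.baseChange R ∘ₗ linearExtension ψ (nE.covDeriv nF φ)
        - linearExtension ψ (nE.covDeriv nF φ) ∘ₗ dE.baseChange R := by
  have h := linearExtension_covDeriv_comp ψ nF (nE := nE) (nG := nF) dF φ
  rw [hφ, linearExtension_covDeriv_comp ψ nE] at h
  rw [atiyahEnd, atiyahEnd]
  grind

lemma semiconjBy_atiyahEnd {d e e' : Module.End Q E} (hd : SemiconjBy d e e')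
    (he : nE.covDeriv nE e = 0) (he' : nE.covDeriv nE e' = 0) :
    SemiconjBy (atiyahEnd ψ nE d) (e.baseChange R) (e'.baseChange R) := by
  have hde : d ∘ₗ e = e' ∘ₗ d := hd
  have h := linearExtension_covDeriv_comp ψ nE (nE := nE) (nG := nE) d e
  rw [hde, linearExtension_covDeriv_comp ψ nE, he, he', linearExtension_zero,
    LinearMap.zero_comp, LinearMap.comp_zero, zero_add, add_zero] at h
  exact h.symm

end Scalars

end Connections

section ExteriorIdeal

variable {R M : Type*} [CommRing R] [AddCommGroup M] [Module R M]

open CliffordAlgebra (involute) in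
lemma involute_mul_ι (m : M) (x : ExteriorAlgebra R M) :
    involute x * ExteriorAlgebra.ι R m = ExteriorAlgebra.ι R m * x := by
  induction x using ExteriorAlgebra.induction with
  | algebraMap r => simp [Algebra.commutes]
  | ι m' =>
    rw [CliffordAlgebra.involute_ι, neg_mul]
    exact neg_eq_of_add_eq_zero_left (ExteriorAlgebra.ι_add_mul_swap m m')
  | mul x y hx hy => rw [map_mul, mul_assoc, hy, ← mul_assoc, hx, mul_assoc]
  | add x y hx hy => rw [map_add, add_mul, hx, hy, mul_add]

lemma mem_span_ι_iff_dvd {m : M} {x : ExteriorAlgebra R M} :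
    x ∈ Ideal.span {ExteriorAlgebra.ι R m} ↔ ExteriorAlgebra.ι R m ∣ x := by
  rw [Ideal.mem_span_singleton']
  constructor
  · rintro ⟨y, rfl⟩
    exact ⟨CliffordAlgebra.involute y, by
      rw [← involute_mul_ι, CliffordAlgebra.involute_involute]⟩
  · rintro ⟨y, rfl⟩
    exact ⟨CliffordAlgebra.involute y, involute_mul_ι m y⟩

instance isTwoSided_span_ι (m : M) : (Ideal.span {ExteriorAlgebra.ι R m}).IsTwoSided where
  mul_mem_of_left y hx := mem_span_ι_iff_dvd.2 ((mem_span_ι_iff_dvd.1 hx).mul_right y)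

end ExteriorIdeal

section Homotopies

variable {Q} {E₀ E₁ F₀ F₁ : Type u} [AddCommGroup E₀] [Module Q E₀] [AddCommGroup E₁] [Module Q E₁]
  [AddCommGroup F₀] [Module Q F₀] [AddCommGroup F₁] [Module Q F₁]

lemma baseChange_mem_nullHomotopic {R E F : Type*} [Ring R] [Algebra Q R]
    [AddCommGroup E] [Module Q E] [AddCommGroup F] [Module Q F]
    {dE : Module.End Q E} {dF : Module.End Q F} {X : E →ₗ[Q] F}
    (hX : X ∈ nullHomotopic dE dF) :
    X.baseChange R ∈ nullHomotopic (dE.baseChange R) (dF.baseChange R) := by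
  obtain ⟨W, rfl⟩ := hX
  exact ⟨W.baseChange R, by rw [LinearMap.baseChange_add, LinearMap.baseChange_comp,
    LinearMap.baseChange_comp]⟩

lemma offDiag_comp_self {f : Q} {A : E₁ →ₗ[Q] E₀} {B : E₀ →ₗ[Q] E₁}
    (hAB : ∀ y, A (B y) = f • y) (hBA : ∀ x, B (A x) = f • x) :
    offDiag A B ∘ₗ offDiag A B = f • LinearMap.id := by
  ext <;> simp [hAB, hBA]

lemma offDiag_comp_prodMap {A : E₁ →ₗ[Q] E₀} {B : E₀ →ₗ[Q] E₁} {C : F₁ →ₗ[Q] F₀}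
    {D : F₀ →ₗ[Q] F₁} {α₀ : E₀ →ₗ[Q] F₀} {α₁ : E₁ →ₗ[Q] F₁}
    (hα₁ : C ∘ₗ α₁ = α₀ ∘ₗ A) (hα₀ : D ∘ₗ α₀ = α₁ ∘ₗ B) :
    offDiag C D ∘ₗ α₀.prodMap α₁ = α₀.prodMap α₁ ∘ₗ offDiag A B :=
  LinearMap.ext fun e => by
    simpa using And.intro (LinearMap.congr_fun hα₁ e.2) (LinearMap.congr_fun hα₀ e.1)

lemma prodMap_comp_prodMap_sub_one_mem_nullHomotopic {A : E₁ →ₗ[Q] E₀} {B : E₀ →ₗ[Q] E₁}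
    {α₀ : E₀ →ₗ[Q] F₀} {α₁ : E₁ →ₗ[Q] F₁} {β₀ : F₀ →ₗ[Q] E₀} {β₁ : F₁ →ₗ[Q] E₁}
    {x : E₀ →ₗ[Q] E₁} {y : E₁ →ₗ[Q] E₀}
    (h₀ : A ∘ₗ x + y ∘ₗ B = β₀ ∘ₗ α₀ - LinearMap.id)
    (h₁ : B ∘ₗ y + x ∘ₗ A = β₁ ∘ₗ α₁ - LinearMap.id) :
    β₀.prodMap β₁ ∘ₗ α₀.prodMap α₁ - 1 ∈ nullHomotopic (offDiag A B) (offDiag A B) :=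
  ⟨offDiag y x, LinearMap.ext fun e => Prod.ext
    (by simpa using LinearMap.congr_fun h₀ e.1) (by simpa using LinearMap.congr_fun h₁ e.2)⟩

end Homotopies

section ChernCharacter

variable {Q} {R E₀ E₁ F₀ F₁ : Type u} [Ring R] [Algebra Q R]
  [AddCommGroup E₀] [Module Q E₀] [AddCommGroup E₁] [Module Q E₁]
  [AddCommGroup F₀] [Module Q F₀] [AddCommGroup F₁] [Module Q F₁] {r₀ r₁ t₀ t₁ : ℕ}

lemma supertrace_eq_zero_of_odd {p₀ : (Fin r₀ → Q) →ₗ[Q] E₀} {s₀ : E₀ →ₗ[Q] (Fin r₀ → Q)}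
    {p₁ : (Fin r₁ → Q) →ₗ[Q] E₁} {s₁ : E₁ →ₗ[Q] (Fin r₁ → Q)}
    {X : Module.End R (R ⊗[Q] (E₀ × E₁))}
    (h₀ : SemiconjBy X ((LinearMap.inl Q E₀ E₁ ∘ₗ LinearMap.fst Q E₀ E₁).baseChange R)
      ((LinearMap.inr Q E₀ E₁ ∘ₗ LinearMap.snd Q E₀ E₁).baseChange R))
    (h₁ : SemiconjBy X ((LinearMap.inr Q E₀ E₁ ∘ₗ LinearMap.snd Q E₀ E₁).baseChange R)
      ((LinearMap.inl Q E₀ E₁ ∘ₗ LinearMap.fst Q E₀ E₁).baseChange R)) :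
    supertrace p₀ s₀ p₁ s₁ X = 0 := by
  have fst_inl (e : E₀) : (LinearMap.fst Q E₀ E₁).baseChange R (X (1 ⊗ₜ (e, 0))) = 0 := by
    have h := LinearMap.congr_fun h₀ (1 ⊗ₜ (e, 0))
    simp only [Module.End.mul_apply, LinearMap.baseChange_tmul, LinearMap.comp_apply,
      LinearMap.fst_apply, LinearMap.inl_apply] at h
    rw [h, ← LinearMap.comp_apply, ← LinearMap.baseChange_comp, ← LinearMap.comp_assoc,
      LinearMap.fst_comp_inr, LinearMap.zero_comp, LinearMap.baseChange_zero,
      LinearMap.zero_apply]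
  have snd_inr (e : E₁) : (LinearMap.snd Q E₀ E₁).baseChange R (X (1 ⊗ₜ (0, e))) = 0 := by
    have h := LinearMap.congr_fun h₁ (1 ⊗ₜ (0, e))
    simp only [Module.End.mul_apply, LinearMap.baseChange_tmul, LinearMap.comp_apply,
      LinearMap.snd_apply, LinearMap.inr_apply] at h
    rw [h, ← LinearMap.comp_apply, ← LinearMap.baseChange_comp, ← LinearMap.comp_assoc,
      LinearMap.snd_comp_inl, LinearMap.zero_comp, LinearMap.baseChange_zero,
      LinearMap.zero_apply]
  simp only [LinearMap.baseChange_eq_ltensor] at fst_inl snd_inr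
  simp [supertrace, strT, trC, fst_inl, snd_inr]

variable {k} {n₀ : Conn k Q E₀} {n₁ : Conn k Q E₁} {n₀' : Conn k Q F₀} {n₁' : Conn k Q F₁}
  {A : E₁ →ₗ[Q] E₀} {B : E₀ →ₗ[Q] E₁} {C : F₁ →ₗ[Q] F₀} {D : F₀ →ₗ[Q] F₁}
  (ψ : Ω[Q⁄k] →ₗ[Q] R)

lemma supertrace_atiyahEnd_pow_eq_zero_of_odd
    {p₀ : (Fin r₀ → Q) →ₗ[Q] E₀} {s₀ : E₀ →ₗ[Q] (Fin r₀ → Q)}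
    {p₁ : (Fin r₁ → Q) →ₗ[Q] E₁} {s₁ : E₁ →ₗ[Q] (Fin r₁ → Q)} {i : ℕ} (hi : Odd i) :
    supertrace p₀ s₀ p₁ s₁ (atiyahEnd ψ (n₀.prod n₁) (offDiag A B) ^ i) = 0 := by
  obtain ⟨j, rfl⟩ := hi
  have odd₀ : SemiconjBy (offDiag A B : Module.End Q (E₀ × E₁))
      (LinearMap.inl Q E₀ E₁ ∘ₗ LinearMap.fst Q E₀ E₁)
      (LinearMap.inr Q E₀ E₁ ∘ₗ LinearMap.snd Q E₀ E₁) := by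
    ext <;> simp
  have odd₁ : SemiconjBy (offDiag A B : Module.End Q (E₀ × E₁))
      (LinearMap.inr Q E₀ E₁ ∘ₗ LinearMap.snd Q E₀ E₁)
      (LinearMap.inl Q E₀ E₁ ∘ₗ LinearMap.fst Q E₀ E₁) := by
    ext <;> simp
  have atiyah_odd₀ := semiconjBy_atiyahEnd ψ odd₀
    (Conn.covDeriv_inl_comp_fst (n₀ := n₀) (n₁ := n₁)) Conn.covDeriv_inr_comp_snd
  have atiyah_odd₁ := semiconjBy_atiyahEnd ψ odd₁
    (Conn.covDeriv_inr_comp_snd (n₀ := n₀) (n₁ := n₁)) Conn.covDeriv_inl_comp_fst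
  rw [pow_succ', pow_mul, pow_two]
  exact supertrace_eq_zero_of_odd
    (atiyah_odd₀.mul_left (Commute.pow_left (atiyah_odd₁.mul_left atiyah_odd₀) j))
    (atiyah_odd₁.mul_left (Commute.pow_left (atiyah_odd₀.mul_left atiyah_odd₁) j))

lemma supertrace_atiyahEnd_pow_eq_of_even
    {p₀ : (Fin r₀ → Q) →ₗ[Q] E₀} {s₀ : E₀ →ₗ[Q] (Fin r₀ → Q)} (hps₀ : ∀ e, p₀ (s₀ e) = e)
    {p₁ : (Fin r₁ → Q) →ₗ[Q] E₁} {s₁ : E₁ →ₗ[Q] (Fin r₁ → Q)} (hps₁ : ∀ e, p₁ (s₁ e) = e)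
    {q₀ : (Fin t₀ → Q) →ₗ[Q] F₀} {u₀ : F₀ →ₗ[Q] (Fin t₀ → Q)} (hqu₀ : ∀ e, q₀ (u₀ e) = e)
    {q₁ : (Fin t₁ → Q) →ₗ[Q] F₁} {u₁ : F₁ →ₗ[Q] (Fin t₁ → Q)} (hqu₁ : ∀ e, q₁ (u₁ e) = e)
    {nE : Conn k Q (E₀ × E₁)} {nF : Conn k Q (F₀ × F₁)}
    {f : Q} (hf : ψ (KaehlerDifferential.D k Q f) = 0)
    (hE : offDiag A B ∘ₗ offDiag A B = f • LinearMap.id)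
    (hF : offDiag C D ∘ₗ offDiag C D = f • LinearMap.id)
    {α₀ : E₀ →ₗ[Q] F₀} {α₁ : E₁ →ₗ[Q] F₁}
    (hα : offDiag C D ∘ₗ α₀.prodMap α₁ = α₀.prodMap α₁ ∘ₗ offDiag A B)
    {β : F₀ × F₁ →ₗ[Q] E₀ × E₁} (hβ : offDiag A B ∘ₗ β = β ∘ₗ offDiag C D)
    (hβα : β ∘ₗ α₀.prodMap α₁ - 1 ∈ nullHomotopic (offDiag A B) (offDiag A B))
    (hαβ : α₀.prodMap α₁ ∘ₗ β - 1 ∈ nullHomotopic (offDiag C D) (offDiag C D))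
    {i : ℕ} (hi : Even i) :
    supertrace p₀ s₀ p₁ s₁ (atiyahEnd ψ nE (offDiag A B) ^ i) =
      supertrace q₀ u₀ q₁ u₁ (atiyahEnd ψ nF (offDiag C D) ^ i) := by
  obtain ⟨j, rfl⟩ := hi.exists_two_nsmul
  have anticommE := baseChange_mul_atiyahEnd ψ (nE := nE) hf hE
  have anticommF := baseChange_mul_atiyahEnd ψ (nE := nF) hf hF
  have commE := commute_sq_of_mul_eq_neg anticommE
  have commF := commute_sq_of_mul_eq_neg anticommF
  have hβ' := congrArg (LinearMap.baseChange R) hβ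
  have hβα' := baseChange_mem_nullHomotopic (R := R) hβα
  have hαβ' := baseChange_mem_nullHomotopic (R := R) hαβ
  rw [LinearMap.baseChange_comp, LinearMap.baseChange_comp] at hβ'
  rw [LinearMap.baseChange_sub, LinearMap.baseChange_comp, LinearMap.baseChange_one] at hβα' hαβ'
  rw [smul_eq_mul, pow_mul, pow_mul]
  exact map_pow_eq_of_homotopyEquiv
    (supertrace_comp_baseChange_offDiag hps₀ hps₁ A B)
    (supertrace_comp_baseChange_offDiag hqu₀ hqu₁ C D)
    (supertrace_comp_baseChange_prodMap hps₀ hps₁ hqu₀ hqu₁ α₀ α₁)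
    hβ' hβα' hαβ' commE commF
    (comp_sq_sub_sq_comp_mem_nullHomotopic anticommE anticommF
      (baseChange_comp_atiyahEnd_sub ψ hα)) j

lemma ι_dvd_strT_atIter_covDeriv_sub
    {p₀ : (Fin r₀ → Q) →ₗ[Q] E₀} {s₀ : E₀ →ₗ[Q] (Fin r₀ → Q)} (hps₀ : ∀ e, p₀ (s₀ e) = e)
    {p₁ : (Fin r₁ → Q) →ₗ[Q] E₁} {s₁ : E₁ →ₗ[Q] (Fin r₁ → Q)} (hps₁ : ∀ e, p₁ (s₁ e) = e)
    {q₀ : (Fin t₀ → Q) →ₗ[Q] F₀} {u₀ : F₀ →ₗ[Q] (Fin t₀ → Q)} (hqu₀ : ∀ e, q₀ (u₀ e) = e)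
    {q₁ : (Fin t₁ → Q) →ₗ[Q] F₁} {u₁ : F₁ →ₗ[Q] (Fin t₁ → Q)} (hqu₁ : ∀ e, q₁ (u₁ e) = e)
    {f : Q} (hE : offDiag A B ∘ₗ offDiag A B = f • LinearMap.id)
    (hF : offDiag C D ∘ₗ offDiag C D = f • LinearMap.id)
    {α₀ : E₀ →ₗ[Q] F₀} {α₁ : E₁ →ₗ[Q] F₁}
    (hα : offDiag C D ∘ₗ α₀.prodMap α₁ = α₀.prodMap α₁ ∘ₗ offDiag A B)
    {β : F₀ × F₁ →ₗ[Q] E₀ × E₁} (hβ : offDiag A B ∘ₗ β = β ∘ₗ offDiag C D)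
    (hβα : β ∘ₗ α₀.prodMap α₁ - 1 ∈ nullHomotopic (offDiag A B) (offDiag A B))
    (hαβ : α₀.prodMap α₁ ∘ₗ β - 1 ∈ nullHomotopic (offDiag C D) (offDiag C D)) (i : ℕ) :
    ExteriorAlgebra.ι Q (KaehlerDifferential.D k Q f) ∣
      strT Q p₀ s₀ p₁ s₁
          (atIter k Q (E₀ × E₁) ((n₀.prod n₁).covDeriv (n₀.prod n₁) (offDiag A B)) i)
        - strT Q q₀ u₀ q₁ u₁
          (atIter k Q (F₀ × F₁) ((n₀'.prod n₁').covDeriv (n₀'.prod n₁') (offDiag C D)) i) := by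
  rw [← mem_span_ι_iff_dvd, ← Ideal.Quotient.mk_eq_mk_iff_sub_mem]
  set I := Ideal.span {ExteriorAlgebra.ι Q (KaehlerDifferential.D k Q f)}
  let φ := Ideal.Quotient.mkₐ Q I
  have hf : (φ.toLinearMap ∘ₗ ExteriorAlgebra.ι Q) (KaehlerDifferential.D k Q f) = 0 :=
    Ideal.Quotient.eq_zero_iff_mem.2 (Ideal.mem_span_singleton_self _)
  change φ _ = φ _
  rw [map_strT_atIter, map_strT_atIter]
  rcases i.even_or_odd with hi | hi
  · exact supertrace_atiyahEnd_pow_eq_of_even _ hps₀ hps₁ hqu₀ hqu₁ hf hE hF hα hβ hβα hαβ hi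
  · exact (supertrace_atiyahEnd_pow_eq_zero_of_odd _ hi).trans
      (supertrace_atiyahEnd_pow_eq_zero_of_odd _ hi).symm

end ChernCharacter

variable {k Q} in
theorem chern_character_homotopy_equivalence_invariant_general
    {E₀ E₁ F₀ F₁ : Type u}
    [AddCommGroup E₀] [Module Q E₀] [AddCommGroup E₁] [Module Q E₁]
    [AddCommGroup F₀] [Module Q F₀] [AddCommGroup F₁] [Module Q F₁]
    {r₀ r₁ t₀ t₁ : ℕ}
    {p₀ : (Fin r₀ → Q) →ₗ[Q] E₀} {s₀ : E₀ →ₗ[Q] (Fin r₀ → Q)} (hps₀ : ∀ e, p₀ (s₀ e) = e)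
    {p₁ : (Fin r₁ → Q) →ₗ[Q] E₁} {s₁ : E₁ →ₗ[Q] (Fin r₁ → Q)} (hps₁ : ∀ e, p₁ (s₁ e) = e)
    {q₀ : (Fin t₀ → Q) →ₗ[Q] F₀} {u₀ : F₀ →ₗ[Q] (Fin t₀ → Q)} (hqu₀ : ∀ e, q₀ (u₀ e) = e)
    {q₁ : (Fin t₁ → Q) →ₗ[Q] F₁} {u₁ : F₁ →ₗ[Q] (Fin t₁ → Q)} (hqu₁ : ∀ e, q₁ (u₁ e) = e)
    {f : Q}
    {A : E₁ →ₗ[Q] E₀} {B : E₀ →ₗ[Q] E₁}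
    (hAB : ∀ y, A (B y) = f • y) (hBA : ∀ x, B (A x) = f • x)
    {C : F₁ →ₗ[Q] F₀} {D : F₀ →ₗ[Q] F₁}
    (hCD : ∀ y, C (D y) = f • y) (hDC : ∀ x, D (C x) = f • x)
    {α₀ : E₀ →ₗ[Q] F₀} {α₁ : E₁ →ₗ[Q] F₁}
    (hα : C ∘ₗ α₁ = α₀ ∘ₗ A ∧ D ∘ₗ α₀ = α₁ ∘ₗ B)
    {β₀ : F₀ →ₗ[Q] E₀} {β₁ : F₁ →ₗ[Q] E₁}
    (hβ : A ∘ₗ β₁ = β₀ ∘ₗ C ∧ B ∘ₗ β₀ = β₁ ∘ₗ D)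
    {x : E₀ →ₗ[Q] E₁} {y : E₁ →ₗ[Q] E₀}
    (hhE₀ : A ∘ₗ x + y ∘ₗ B = β₀ ∘ₗ α₀ - LinearMap.id)
    (hhE₁ : B ∘ₗ y + x ∘ₗ A = β₁ ∘ₗ α₁ - LinearMap.id)
    {v : F₀ →ₗ[Q] F₁} {w : F₁ →ₗ[Q] F₀}
    (hhF₀ : C ∘ₗ v + w ∘ₗ D = α₀ ∘ₗ β₀ - LinearMap.id)
    (hhF₁ : D ∘ₗ w + v ∘ₗ C = α₁ ∘ₗ β₁ - LinearMap.id)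
    {na0 : Conn k Q E₀} {na1 : Conn k Q E₁} {nb0 : Conn k Q F₀} {nb1 : Conn k Q F₁}
    {AtE : (E₀ × E₁) →ₗ[Q] Ω[Q⁄k] ⊗[Q] (E₀ × E₁)}
    {At₁ : E₁ →ₗ[Q] Ω[Q⁄k] ⊗[Q] E₀} {At₀ : E₀ →ₗ[Q] Ω[Q⁄k] ⊗[Q] E₁}
    (hAt₁ : ∀ e, At₁ e = na0.toFun (A e) - (LinearMap.lTensor (Ω[Q⁄k]) A) (na1.toFun e))
    (hAt₀ : ∀ e, At₀ e = na1.toFun (B e) - (LinearMap.lTensor (Ω[Q⁄k]) B) (na0.toFun e))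
    (hAtE : AtE = (LinearMap.lTensor (Ω[Q⁄k]) (LinearMap.inr Q E₀ E₁)) ∘ₗ At₀ ∘ₗ
          LinearMap.fst Q E₀ E₁
        + (LinearMap.lTensor (Ω[Q⁄k]) (LinearMap.inl Q E₀ E₁)) ∘ₗ At₁ ∘ₗ
          LinearMap.snd Q E₀ E₁)
    {AtF : (F₀ × F₁) →ₗ[Q] Ω[Q⁄k] ⊗[Q] (F₀ × F₁)}
    {Bt₁ : F₁ →ₗ[Q] Ω[Q⁄k] ⊗[Q] F₀} {Bt₀ : F₀ →ₗ[Q] Ω[Q⁄k] ⊗[Q] F₁}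
    (hBt₁ : ∀ e, Bt₁ e = nb0.toFun (C e) - (LinearMap.lTensor (Ω[Q⁄k]) C) (nb1.toFun e))
    (hBt₀ : ∀ e, Bt₀ e = nb1.toFun (D e) - (LinearMap.lTensor (Ω[Q⁄k]) D) (nb0.toFun e))
    (hAtF : AtF = (LinearMap.lTensor (Ω[Q⁄k]) (LinearMap.inr Q F₀ F₁)) ∘ₗ Bt₀ ∘ₗ
          LinearMap.fst Q F₀ F₁
        + (LinearMap.lTensor (Ω[Q⁄k]) (LinearMap.inl Q F₀ F₁)) ∘ₗ Bt₁ ∘ₗ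
          LinearMap.snd Q F₀ F₁)
    (i : ℕ) :
    ExteriorAlgebra.ι Q (KaehlerDifferential.D k Q f) ∣
      strT Q p₀ s₀ p₁ s₁ (atIter k Q (E₀ × E₁) AtE i)
        - strT Q q₀ u₀ q₁ u₁ (atIter k Q (F₀ × F₁) AtF i) := by
  rw [Conn.eq_covDeriv_offDiag hAt₁ hAt₀ hAtE, Conn.eq_covDeriv_offDiag hBt₁ hBt₀ hAtF]
  exact ι_dvd_strT_atIter_covDeriv_sub hps₀ hps₁ hqu₀ hqu₁
    (offDiag_comp_self hAB hBA) (offDiag_comp_self hCD hDC)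
    (offDiag_comp_prodMap hα.1 hα.2) (offDiag_comp_prodMap hβ.1 hβ.2)
    (prodMap_comp_prodMap_sub_one_mem_nullHomotopic hhE₀ hhE₁)
    (prodMap_comp_prodMap_sub_one_mem_nullHomotopic hhF₀ hhF₁) i

theorem chern_character_homotopy_equivalence_invariant
    [Algebra ℚ k] [Algebra ℚ Q] [IsScalarTower ℚ k Q]
    (n : ℕ) [Algebra.Smooth k Q]
    (hdim : ∀ ω : Fin (n + 1) → Ω[Q⁄k],
      (List.ofFn (fun t => ExteriorAlgebra.ι Q (ω t))).prod = 0)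
    (E₀ E₁ F₀ F₁ : Type u)
    [AddCommGroup E₀] [Module Q E₀] [AddCommGroup E₁] [Module Q E₁]
    [AddCommGroup F₀] [Module Q F₀] [AddCommGroup F₁] [Module Q F₁]
    [Module.Finite Q E₀] [Module.Projective Q E₀]
    [Module.Finite Q E₁] [Module.Projective Q E₁]
    [Module.Finite Q F₀] [Module.Projective Q F₀]
    [Module.Finite Q F₁] [Module.Projective Q F₁]
    {r₀ r₁ t₀ t₁ : ℕ}
    (p₀ : (Fin r₀ → Q) →ₗ[Q] E₀) (s₀ : E₀ →ₗ[Q] (Fin r₀ → Q)) (hps₀ : ∀ e, p₀ (s₀ e) = e)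
    (p₁ : (Fin r₁ → Q) →ₗ[Q] E₁) (s₁ : E₁ →ₗ[Q] (Fin r₁ → Q)) (hps₁ : ∀ e, p₁ (s₁ e) = e)
    (q₀ : (Fin t₀ → Q) →ₗ[Q] F₀) (u₀ : F₀ →ₗ[Q] (Fin t₀ → Q)) (hqu₀ : ∀ e, q₀ (u₀ e) = e)
    (q₁ : (Fin t₁ → Q) →ₗ[Q] F₁) (u₁ : F₁ →ₗ[Q] (Fin t₁ → Q)) (hqu₁ : ∀ e, q₁ (u₁ e) = e)
    (f : Q)
    -- the matrix factorization E = (E₁ -A→ E₀ -B→ E₁)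
    (A : E₁ →ₗ[Q] E₀) (B : E₀ →ₗ[Q] E₁)
    (hAB : ∀ y, A (B y) = f • y) (hBA : ∀ x, B (A x) = f • x)
    -- the matrix factorization E′ = (F₁ -C→ F₀ -D→ F₁)
    (C : F₁ →ₗ[Q] F₀) (D : F₀ →ₗ[Q] F₁)
    (hCD : ∀ y, C (D y) = f • y) (hDC : ∀ x, D (C x) = f • x)
    -- a homotopy equivalence: strict morphisms α : E → E′ and β : E′ → E …
    (α₀ : E₀ →ₗ[Q] F₀) (α₁ : E₁ →ₗ[Q] F₁)
    (hα : C ∘ₗ α₁ = α₀ ∘ₗ A ∧ D ∘ₗ α₀ = α₁ ∘ₗ B)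
    (β₀ : F₀ →ₗ[Q] E₀) (β₁ : F₁ →ₗ[Q] E₁)
    (hβ : A ∘ₗ β₁ = β₀ ∘ₗ C ∧ B ∘ₗ β₀ = β₁ ∘ₗ D)
    -- … with β∘α homotopic to id_E and α∘β homotopic to id_{E′}
    (x : E₀ →ₗ[Q] E₁) (y : E₁ →ₗ[Q] E₀)
    (hhE₀ : A ∘ₗ x + y ∘ₗ B = β₀ ∘ₗ α₀ - LinearMap.id)
    (hhE₁ : B ∘ₗ y + x ∘ₗ A = β₁ ∘ₗ α₁ - LinearMap.id)
    (v : F₀ →ₗ[Q] F₁) (w : F₁ →ₗ[Q] F₀)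
    (hhF₀ : C ∘ₗ v + w ∘ₗ D = α₀ ∘ₗ β₀ - LinearMap.id)
    (hhF₁ : D ∘ₗ w + v ∘ₗ C = α₁ ∘ₗ β₁ - LinearMap.id)
    -- connections and Atiyah classes for E and for E′
    (na0 : Conn k Q E₀) (na1 : Conn k Q E₁) (nb0 : Conn k Q F₀) (nb1 : Conn k Q F₁)
    (AtE : (E₀ × E₁) →ₗ[Q] Ω[Q⁄k] ⊗[Q] (E₀ × E₁))
    (At₁ : E₁ →ₗ[Q] Ω[Q⁄k] ⊗[Q] E₀) (At₀ : E₀ →ₗ[Q] Ω[Q⁄k] ⊗[Q] E₁)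
    (hAt₁ : ∀ e, At₁ e = na0.toFun (A e) - (LinearMap.lTensor (Ω[Q⁄k]) A) (na1.toFun e))
    (hAt₀ : ∀ e, At₀ e = na1.toFun (B e) - (LinearMap.lTensor (Ω[Q⁄k]) B) (na0.toFun e))
    (hAtE : AtE = (LinearMap.lTensor (Ω[Q⁄k]) (LinearMap.inr Q E₀ E₁)) ∘ₗ At₀ ∘ₗ
          LinearMap.fst Q E₀ E₁
        + (LinearMap.lTensor (Ω[Q⁄k]) (LinearMap.inl Q E₀ E₁)) ∘ₗ At₁ ∘ₗ
          LinearMap.snd Q E₀ E₁)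
    (AtF : (F₀ × F₁) →ₗ[Q] Ω[Q⁄k] ⊗[Q] (F₀ × F₁))
    (Bt₁ : F₁ →ₗ[Q] Ω[Q⁄k] ⊗[Q] F₀) (Bt₀ : F₀ →ₗ[Q] Ω[Q⁄k] ⊗[Q] F₁)
    (hBt₁ : ∀ e, Bt₁ e = nb0.toFun (C e) - (LinearMap.lTensor (Ω[Q⁄k]) C) (nb1.toFun e))
    (hBt₀ : ∀ e, Bt₀ e = nb1.toFun (D e) - (LinearMap.lTensor (Ω[Q⁄k]) D) (nb0.toFun e))
    (hAtF : AtF = (LinearMap.lTensor (Ω[Q⁄k]) (LinearMap.inr Q F₀ F₁)) ∘ₗ Bt₀ ∘ₗ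
          LinearMap.fst Q F₀ F₁
        + (LinearMap.lTensor (Ω[Q⁄k]) (LinearMap.inl Q F₀ F₁)) ∘ₗ Bt₁ ∘ₗ
          LinearMap.snd Q F₀ F₁) :
    ∃ w : ExteriorAlgebra Q (Ω[Q⁄k]),
      (∑ i ∈ Finset.range (n + 1), (algebraMap ℚ Q (1 / (i.factorial : ℚ))) •
          strT Q p₀ s₀ p₁ s₁ (atIter k Q (E₀ × E₁) AtE i))
        - (∑ i ∈ Finset.range (n + 1), (algebraMap ℚ Q (1 / (i.factorial : ℚ))) •
            strT Q q₀ u₀ q₁ u₁ (atIter k Q (F₀ × F₁) AtF i))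
        = ExteriorAlgebra.ι Q (KaehlerDifferential.D k Q f) * w := by
  simp only [← Finset.sum_sub_distrib, ← smul_sub]
  exact Finset.dvd_sum fun i _ => dvd_smul_of_dvd _
    (chern_character_homotopy_equivalence_invariant_general hps₀ hps₁ hqu₀ hqu₁ hAB hBA hCD hDC
      hα hβ hhE₀ hhE₁ hhF₀ hhF₁ hAt₁ hAt₀ hAtE hBt₁ hBt₀ hAtF i)
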